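/- Fix integers d ≥ 1, r ≥ 0 and a strict partition λ with d parts such that λ_i ≤ r + 2d − 2i + 1 for all i. Define ν_i = min{μ_i, μ_{i+1}, …, μ_d} for i ∈ {1,…,d}, and let P be the shifted tableau of shape λ with P(i,c) = c for c ≥ 0 and P(i,c) = r − c − ν_{d+1+c} for c < 0. Then the reading word π(P) = P_d P_{d−1} ⋯ P_1, viewed as a word in the letters {0, …, d+r−1}, is a reduced word of w^λ ∈ W(B_{d+r}). -/

import Mathlib

open scoped BigOperators

namespace BST

/-- `lam` (1-indexed, with `d` parts) is a strict partition: strictly decreasing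
positive parts `lam 1 > lam 2 > ⋯ > lam d > 0`. -/
def IsStrictPartition (d : ℕ) (lam : ℕ → ℕ) : Prop :=
  (∀ i : ℕ, 1 ≤ i → i < d → lam (i + 1) < lam i) ∧ 1 ≤ lam d

/-- The size `|λ| = λ_1 + ⋯ + λ_d`. -/
def sizeP (d : ℕ) (lam : ℕ → ℕ) : ℕ := ∑ i ∈ Finset.Icc 1 d, lam i

/-- The shifted diagram `D(λ) ⊆ ℤ × ℤ`: row `i` (1 ≤ i ≤ d) occupies columns
`i - d, …, λ_i + i - d - 1`. -/
def Diagram (d : ℕ) (lam : ℕ → ℕ) : Set (ℤ × ℤ) :=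
  {p : ℤ × ℤ | 1 ≤ p.1 ∧ p.1 ≤ (d : ℤ) ∧ p.1 - (d : ℤ) ≤ p.2 ∧
    p.2 + (d : ℤ) + 1 ≤ (lam p.1.toNat : ℤ) + p.1}

/-- The hook `H(i,c)`. -/
def Hook (d : ℕ) (lam : ℕ → ℕ) (i c : ℤ) : Set (ℤ × ℤ) :=
  {(i, c)} ∪ {p ∈ Diagram d lam | (p.1 = i ∧ c < p.2) ∨ (p.2 = c ∧ i < p.1)} ∪
    {p ∈ Diagram d lam | c < 0 ∧ p.1 = (d : ℤ) + 1 + c}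

/-- The extended hook `H̃(i,c)`. -/
def ExtHook (d : ℕ) (lam : ℕ → ℕ) (i c : ℤ) : Set (ℤ × ℤ) :=
  Hook d lam i c ∪ {p : ℤ × ℤ | c < 0 ∧ p = ((d : ℤ) + 1 + c, c)}

/-- The extended diagram `D(λ) ∪ {(i, i - d - 1) : 1 ≤ i ≤ d}`. -/
def ExtDiagram (d : ℕ) (lam : ℕ → ℕ) : Set (ℤ × ℤ) :=
  Diagram d lam ∪ {p : ℤ × ℤ | 1 ≤ p.1 ∧ p.1 ≤ (d : ℤ) ∧ p.2 = p.1 - ((d : ℤ) + 1)}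

/-- The extended filling `B̃`, with `B̃(i, i - d - 1) = B(i, 0)`. -/
def ExtFilling (d : ℕ) (B : ℤ × ℤ → ℕ) : ℤ × ℤ → ℕ :=
  fun p => if p.2 = p.1 - ((d : ℤ) + 1) then B (p.1, 0) else B p

/-- The rank function `rk(i,c)`. -/
def rk (d : ℕ) (lam : ℕ → ℕ) (i c : ℤ) : ℤ :=
  if 0 ≤ c then (lam i.toNat : ℤ) - d + i - c
  else (lam i.toNat : ℤ) - d + i + (lam ((d : ℤ) + 1 + c).toNat : ℤ) + c + 1

/-- A bijective filling of `D(λ)` with `1, …, |λ|` (normalized to be `0` off the diagram). -/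
def IsFilling (d : ℕ) (lam : ℕ → ℕ) (B : ℤ × ℤ → ℕ) : Prop :=
  Set.BijOn B (Diagram d lam) (Set.Icc 1 (sizeP d lam)) ∧
    ∀ p : ℤ × ℤ, p ∉ Diagram d lam → B p = 0

/-- A balanced shifted tableau: a bijective filling such that at each box `(i,c)`,
`B(i,c)` is the `rk(i,c)`-th largest entry of the multiset of values of `B̃` on the
extended hook, i.e. exactly `rk(i,c) - 1` boxes of the extended hook carry a value
strictly larger than `B(i,c)`. -/
def IsBalanced (d : ℕ) (lam : ℕ → ℕ) (B : ℤ × ℤ → ℕ) : Prop :=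
  IsFilling d lam B ∧ ∀ p ∈ Diagram d lam,
    ({q ∈ ExtHook d lam p.1 p.2 | B p < ExtFilling d B q}.ncard : ℤ) =
      rk d lam p.1 p.2 - 1

/-- A standard Young tableau of shifted shape `λ`. -/
def IsSYT (d : ℕ) (lam : ℕ → ℕ) (B : ℤ × ℤ → ℕ) : Prop :=
  IsFilling d lam B ∧ ∀ p ∈ Diagram d lam, ∀ q ∈ Diagram d lam,
    ((p.1 = q.1 ∧ p.2 < q.2) → B p < B q) ∧ ((p.2 = q.2 ∧ p.1 < q.1) → B p < B q)

/-- The simple reflections of `W(B_n)`, acting on `ℤ`: `s 0` swaps `1 ↔ -1`,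
and `s a` (for `a ≥ 1`) swaps `a ↔ a+1` and `-a ↔ -(a+1)`. -/
def sB (a : ℕ) : Equiv.Perm ℤ :=
  if a = 0 then Equiv.swap 1 (-1)
  else Equiv.swap (a : ℤ) ((a : ℤ) + 1) * Equiv.swap (-(a : ℤ)) (-(a : ℤ) - 1)

/-- The product `s_{a_1} s_{a_2} ⋯ s_{a_m}` of a word. -/
def wordProd (L : List ℕ) : Equiv.Perm ℤ := (L.map sB).prod

/-- A signed permutation in `W(B_n)`: odd, and the identity beyond `n`. -/
def IsSignedPerm (n : ℕ) (w : Equiv.Perm ℤ) : Prop :=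
  (∀ i : ℤ, w (-i) = -(w i)) ∧ ∀ i : ℤ, (n : ℤ) < |i| → w i = i

/-- The Coxeter length of `w` in `W(B_n)`. -/
noncomputable def lengthB (n : ℕ) (w : Equiv.Perm ℤ) : ℕ :=
  sInf {m : ℕ | ∃ L : List ℕ, (∀ a ∈ L, a < n) ∧ wordProd L = w ∧ L.length = m}

/-- `L` is a reduced word of `w` in `W(B_n)`. -/
def IsReducedWord (n : ℕ) (w : Equiv.Perm ℤ) (L : List ℕ) : Prop :=
  (∀ a ∈ L, a < n) ∧ wordProd L = w ∧ L.length = lengthB n w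

/-- The vector `e_k` (for `k ≥ 1` the `k`-th standard basis vector, with the
conventions `e 0 = 0` and `e (-k) = - e k`), represented as an odd function `ℤ → ℤ`. -/
def eVec (k : ℤ) : ℤ → ℤ :=
  fun t => if t = 0 then 0 else if t = k then 1 else if t = -k then -1 else 0

/-- The positive roots of type `B_n`. -/
def PosRoots (n : ℕ) : Set (ℤ → ℤ) :=
  {v | (∃ i j : ℤ, 1 ≤ i ∧ i < j ∧ j ≤ (n : ℤ) ∧
        (v = eVec j - eVec i ∨ v = eVec j + eVec i)) ∨
       (∃ i : ℤ, 1 ≤ i ∧ i ≤ (n : ℤ) ∧ v = eVec i)}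

/-- The action of a signed permutation on vectors: `w · e_i = e_{w(i)}`. -/
def actB (w : Equiv.Perm ℤ) (v : ℤ → ℤ) : ℤ → ℤ := fun t => v (w⁻¹ t)

/-- The inversion set `Inv(w) = {α ∈ Φ⁺ : w⁻¹ · α ∈ -Φ⁺}`. -/
def InvSet (n : ℕ) (w : Equiv.Perm ℤ) : Set (ℤ → ℤ) :=
  {α | α ∈ PosRoots n ∧ -(actB w⁻¹ α) ∈ PosRoots n}

/-- The simple roots: `α_0 = e_1` and `α_a = e_{a+1} - e_a` for `a ≥ 1`. -/
def alphaRoot (a : ℕ) : ℤ → ℤ :=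
  if a = 0 then eVec 1 else eVec ((a : ℤ) + 1) - eVec (a : ℤ)

/-- The reflection order of a word: `reflOrder L t = γ_{t+1} = s_{a_1} ⋯ s_{a_t} · α_{a_{t+1}}`
(0-indexed). -/
def reflOrder (L : List ℕ) (t : ℕ) : ℤ → ℤ :=
  actB (wordProd (L.take t)) (alphaRoot (L.getD t 0))

/-- The trapezoid `Z(d,r) = (r+2d-1, r+2d-3, …, r+1)`. -/
def Zlam (d r : ℕ) : ℕ → ℕ := fun i => r + 2 * d + 1 - 2 * i

/-- The labeling `f : D(Z(d,r)) → Φ⁺`. -/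
def fLabel (d r : ℕ) (p : ℤ × ℤ) : ℤ → ℤ :=
  if p.2 ≤ 0 then eVec ((d : ℤ) + 1 - p.1) - eVec p.2
  else if p.2 ≤ (r : ℤ) then eVec ((d : ℤ) + 1 - p.1) + eVec (p.2 + (d : ℤ))
  else eVec ((d : ℤ) + 1 - p.1) - eVec (p.2 - (r : ℤ))

/-- The extended labeling `f̃`, with `f̃(i, i - d - 1) = 2 e_{d+1-i}`. -/
def fExtLabel (d r : ℕ) (p : ℤ × ℤ) : ℤ → ℤ :=
  if p.2 = p.1 - ((d : ℤ) + 1) then (2 : ℤ) • eVec ((d : ℤ) + 1 - p.1)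
  else fLabel d r p

/-- `w` is the signed permutation `w^{(d,r)} ∈ W(B_{d+r})`, i.e.
`w(i) = d + i` for `1 ≤ i ≤ r` and `w(i) = -(i - r)` for `r < i ≤ d + r`. -/
def IsWdr (d r : ℕ) (w : Equiv.Perm ℤ) : Prop :=
  IsSignedPerm (d + r) w ∧
    (∀ i : ℤ, 1 ≤ i → i ≤ (r : ℤ) → w i = (d : ℤ) + i) ∧
    (∀ i : ℤ, (r : ℤ) < i → i ≤ (d : ℤ) + (r : ℤ) → w i = -(i - r))


/-- `x` lies strictly between `y` and `z` (i.e. `min(y,z) < x < max(y,z)`). -/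
def Between (x y z : ℕ) : Prop := (y < x ∧ x < z) ∨ (z < x ∧ x < y)

/-- A nonempty list is unimodal: strictly decreasing down to its minimum
(at 0-indexed position `k`), then strictly increasing. -/
def Unimodal (L : List ℕ) : Prop :=
  ∃ k : ℕ, k < L.length ∧
    (∀ a b : ℕ, a < b → b ≤ k → L.getD b 0 < L.getD a 0) ∧
    (∀ a b : ℕ, k ≤ a → a < b → b < L.length → L.getD a 0 < L.getD b 0)

/-- Row `i` of the distinguished tableau of shape `Z(d,r)`:
`(r+d-i, …, r+1, 0, 1, …, r+d-i)`. -/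
def rowWord (d r i : ℕ) : List ℕ :=
  (List.range (r + 2 * (d - i) + 1)).map fun t =>
    if t < d - i then r + (d - i) - t else t - (d - i)

/-- The reading word `π(T) = T_d T_{d-1} ⋯ T_1` of the distinguished tableau of
shape `Z(d,r)`. -/
def piWord (d r : ℕ) : List ℕ :=
  (List.range d).flatMap fun k => rowWord d r (d - k)

/-- `μ_i = Z(d,r)_i - λ_i`. -/
def muF (d r : ℕ) (lam : ℕ → ℕ) (i : ℕ) : ℕ := r + 2 * d + 1 - 2 * i - lam i

/-- `σ_i = μ_1 + ⋯ + μ_i`. -/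
def sigmaF (d r : ℕ) (lam : ℕ → ℕ) (i : ℕ) : ℕ := ∑ t ∈ Finset.Icc 1 i, muF d r lam t

/-- `ν_i = min{μ_i, …, μ_d}`. -/
noncomputable def nuF (d r : ℕ) (lam : ℕ → ℕ) (i : ℕ) : ℕ :=
  sInf {m : ℕ | ∃ j : ℕ, i ≤ j ∧ j ≤ d ∧ m = muF d r lam j}

/-- The word `a^λ`: the concatenation over `i = 1, …, d` of the increasing runs
`(d+r-i-μ_i+1, …, d+r-i)`. -/
def aLamWord (d r : ℕ) (lam : ℕ → ℕ) : List ℕ :=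
  (List.range d).flatMap fun k =>
    (List.range (muF d r lam (k + 1))).map fun t =>
      d + r - (k + 1) - muF d r lam (k + 1) + 1 + t

/-- Row `i` of the tableau `P(w^λ)`: entries `P(i,c) = c` for `c ≥ 0` and
`P(i,c) = r - c - ν_{d+1+c}` for `c < 0`. -/
noncomputable def rowWordP (d r : ℕ) (lam : ℕ → ℕ) (i : ℕ) : List ℕ :=
  (List.range (lam i)).map fun t =>
    if t < d - i then r + (d - i) - t - nuF d r lam (i + 1 + t) else t - (d - i)

/-- The reading word `π(P(w^λ))`. -/
noncomputable def piWordP (d r : ℕ) (lam : ℕ → ℕ) : List ℕ :=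
  (List.range d).flatMap fun k => rowWordP d r lam (d - k)

/-- The shape obtained from `λ` by adding one box at the end of row `i`. -/
def stepShape (lam : ℕ → ℕ) (i : ℕ) : ℕ → ℕ :=
  fun t => if t = i then lam i + 1 else lam t

/-- The box-adding map `f_i` on fillings: swap columns `j = λ_i + i - d` and `j + 1`
(in rows `1, …, i-1`), and put the value `N + 1` in the new box `(i, j)`. -/
def addBox (d : ℕ) (lam : ℕ → ℕ) (i : ℕ) (N : ℕ) (B : ℤ × ℤ → ℕ) : ℤ × ℤ → ℕ :=
  fun p =>
    if p = ((i : ℤ), (lam i : ℤ) + (i : ℤ) - (d : ℤ)) then N + 1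
    else if 1 ≤ p.1 ∧ p.1 < (i : ℤ) ∧ p.2 = (lam i : ℤ) + (i : ℤ) - (d : ℤ) then
      B (p.1, p.2 + 1)
    else if 1 ≤ p.1 ∧ p.1 < (i : ℤ) ∧ p.2 = (lam i : ℤ) + (i : ℤ) - (d : ℤ) + 1 then
      B (p.1, p.2 - 1)
    else B p

/-- Successively apply the box-adding maps along a list of row indices,
tracking the current shape. -/
def FmapAux (d : ℕ) : List ℕ → (ℕ → ℕ) → (ℤ × ℤ → ℕ) → (ℤ × ℤ → ℕ)
  | [], _, B => B
  | i :: rest, lam, B => FmapAux d rest (stepShape lam i) (addBox d lam i (sizeP d lam) B)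

/-- The shape after successively adding boxes along a list of row indices. -/
def shapeAux : List ℕ → (ℕ → ℕ) → (ℕ → ℕ)
  | [], lam => lam
  | i :: rest, lam => shapeAux rest (stepShape lam i)

/-- The list of row indices `1^{μ_1} 2^{μ_2} ⋯ d^{μ_d}` used to pad `λ` to `Z(d,r)`. -/
def rowsList (d r : ℕ) (lam : ℕ → ℕ) : List ℕ :=
  (List.range d).flatMap fun k => List.replicate (muF d r lam (k + 1)) (k + 1)

/-- `BS(Z(d,r))|_λ`: balanced tableaux of shape `Z(d,r)` such that for each
`i ∈ {1,…,d}` the entries `N + σ_{i-1} + 1, …, N + σ_i` all occur in row `i`. -/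
def BSRestricted (d r : ℕ) (lam : ℕ → ℕ) : Set (ℤ × ℤ → ℕ) :=
  {T | IsBalanced d (Zlam d r) T ∧ ∀ i : ℕ, 1 ≤ i → i ≤ d →
    ∀ k : ℕ, sizeP d lam + sigmaF d r lam (i - 1) + 1 ≤ k →
      k ≤ sizeP d lam + sigmaF d r lam i →
      ∃ c : ℤ, ((i : ℤ), c) ∈ Diagram d (Zlam d r) ∧ T ((i : ℤ), c) = k}

/-- `w ∈ W(B_n)` pattern embeds the signed pattern `v` (given as its one-line
notation, a list of nonzero integers). -/
def PatternEmbeds (n : ℕ) (w : Equiv.Perm ℤ) (v : List ℤ) : Prop :=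
  ∃ idx : Fin v.length → ℤ, StrictMono idx ∧
    (∀ j, 1 ≤ idx j ∧ idx j ≤ (n : ℤ)) ∧
    (∀ j, 0 < w (idx j) ↔ 0 < v.get j) ∧
    (∀ j k, |w (idx j)| < |w (idx k)| ↔ |v.get j| < |v.get k|)


lemma sB_apply (a : ℕ) (x : ℤ) : sB a x =
    if a = 0 then (if x = 1 then -1 else if x = -1 then 1 else x)
    else if x = a then (a:ℤ)+1 else if x = a+1 then (a:ℤ) else if x = -a then -(a:ℤ)-1
      else if x = -a-1 then -(a:ℤ) else x := by
  unfold sB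
  by_cases h : a = 0
  · simp [h, Equiv.swap_apply_def]
  · rw [if_neg h, if_neg h, Equiv.Perm.mul_apply]
    have h2 := Equiv.swap_apply_def (-(a:ℤ)) (-(a:ℤ)-1) x
    generalize Equiv.swap (-(a:ℤ)) (-(a:ℤ)-1) x = y at *
    rw [Equiv.swap_apply_def]
    split_ifs at h2 <;> subst h2 <;> split_ifs <;> omega

lemma sB_sq (a : ℕ) : sB a * sB a = 1 := by
  ext x
  rw [Equiv.Perm.mul_apply, Equiv.Perm.one_apply]
  have h2 := sB_apply a x
  have h3 := sB_apply a (sB a x)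
  generalize sB a (sB a x) = z at *
  generalize sB a x = y at *
  by_cases ha : a = 0
  · rw [if_pos ha] at h2 h3
    split_ifs at h2 <;> split_ifs at h3 <;> omega
  · rw [if_neg ha] at h2 h3
    split_ifs at h2 <;> split_ifs at h3 <;> omega

lemma sB_comm (a b : ℕ) (h : a + 2 ≤ b) : sB a * sB b = sB b * sB a := by
  have : Equiv.Perm.Disjoint (sB a) (sB b) := by
    intro x
    rw [sB_apply, sB_apply]
    have hb : b ≠ 0 := by omega
    by_cases ha : a = 0
    · simp only [ha, hb, if_true, if_false]
      split_ifs <;> omega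
    · simp only [ha, hb, if_false]
      split_ifs <;> omega
  exact this.commute

lemma sB_odd (a : ℕ) (x : ℤ) : sB a (-x) = - sB a x := by
  rw [sB_apply, sB_apply]
  by_cases ha : a = 0
  · simp only [ha, if_true]
    split_ifs <;> omega
  · simp only [ha, if_false]
    split_ifs <;> omega

lemma sB_braid (a : ℕ) (h : 1 ≤ a) :
    sB a * sB (a+1) * sB a = sB (a+1) * sB a * sB (a+1) := by
  ext x
  have ha : a ≠ 0 := by omega
  have k1 : ∀ x : ℤ, sB a x = if x = a then (a:ℤ)+1 else if x = a+1 then (a:ℤ)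
      else if x = -a then -(a:ℤ)-1 else if x = -a-1 then -(a:ℤ) else x := by
    intro x; rw [sB_apply, if_neg ha]
  have k2 : ∀ x : ℤ, sB (a+1) x = if x = a+1 then (a:ℤ)+2 else if x = a+2 then (a:ℤ)+1
      else if x = -a-1 then -(a:ℤ)-2 else if x = -a-2 then -(a:ℤ)-1 else x := by
    intro x; rw [sB_apply, if_neg (by omega)]; push_cast
    split_ifs <;> omega
  have A0 : sB a a = (a:ℤ)+1 := by rw [k1]; split_ifs <;> omega
  have A1 : sB a ((a:ℤ)+1) = a := by rw [k1]; split_ifs <;> omega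
  have A2 : sB a ((a:ℤ)+2) = (a:ℤ)+2 := by rw [k1]; split_ifs <;> omega
  have B0 : sB (a+1) a = (a:ℤ) := by rw [k2]; split_ifs <;> omega
  have B1 : sB (a+1) ((a:ℤ)+1) = (a:ℤ)+2 := by rw [k2]; split_ifs <;> omega
  have B2 : sB (a+1) ((a:ℤ)+2) = (a:ℤ)+1 := by rw [k2]; split_ifs <;> omega
  simp only [Equiv.Perm.mul_apply]
  by_cases h1 : x = a
  · simp only [h1, A0, A1, A2, B0, B1, B2]
  by_cases h2 : x = a + 1
  · simp only [h2, A0, A1, A2, B0, B1, B2]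
  by_cases h3 : x = a + 2
  · simp only [h3, A0, A1, A2, B0, B1, B2]
  by_cases h4 : x = -a
  · simp only [h4, sB_odd, A0, A1, A2, B0, B1, B2]
  by_cases h5 : x = -(a+1)
  · simp only [h5, sB_odd, A0, A1, A2, B0, B1, B2]
  by_cases h6 : x = -(a+2)
  · simp only [h6, sB_odd, A0, A1, A2, B0, B1, B2]
  have e1 : sB a x = x := by rw [k1]; split_ifs <;> omega
  have e2 : sB (a+1) x = x := by rw [k2]; split_ifs <;> omega
  simp only [e1, e2]

/-- ascending product `s_p s_{p+1} ⋯ s_{p+k-1}` -/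
def up (p : ℕ) : ℕ → Equiv.Perm ℤ
  | 0 => 1
  | k+1 => up p k * sB (p+k)

lemma up_add (p k l : ℕ) : up p (k+l) = up p k * up (p+k) l := by
  induction l with
  | zero => simp [up]
  | succ l ih => rw [← add_assoc, up, ih, up, mul_assoc, add_assoc]

lemma up_succ' (p k : ℕ) : up p (k+1) = sB p * up (p+1) k := by
  rw [add_comm k 1, up_add]; simp [up]

/-- letters far above -/
lemma sB_up_comm_lo (j p k : ℕ) (h : j + 2 ≤ p) : sB j * up p k = up p k * sB j := by
  induction k with
  | zero => simp [up]
  | succ k ih => rw [up, ← mul_assoc, ih, mul_assoc, sB_comm j (p+k) (by omega), mul_assoc]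

lemma sB_up_comm_hi (j p k : ℕ) (h : p + k + 1 ≤ j) : sB j * up p k = up p k * sB j := by
  induction k with
  | zero => simp [up]
  | succ k ih =>
    rw [up, ← mul_assoc, ih (by omega), mul_assoc, ← sB_comm (p+k) j (by omega), mul_assoc]

lemma up_shift (p k j : ℕ) (h1 : 1 ≤ j) (h2 : p ≤ j) (h3 : j + 2 ≤ p + k) :
    up p k * sB j = sB (j+1) * up p k := by
  obtain ⟨x, rfl⟩ := Nat.exists_eq_add_of_le h2
  obtain ⟨y, rfl⟩ : ∃ y, k = x + (2 + y) := ⟨k - x - 2, by omega⟩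
  rw [up_add, up_add (p+x) 2 y]
  have e : up (p+x) 2 = sB (p+x) * sB (p+x+1) := by simp [up]
  rw [e, mul_assoc, mul_assoc (sB (p+x) * sB (p+x+1)), ← sB_up_comm_lo _ _ _ (by omega),
    ← mul_assoc (sB (p+x) * sB (p+x+1)), sB_braid _ h1, ← mul_assoc, ← mul_assoc, ← mul_assoc,
    ← sB_up_comm_hi _ _ _ (by omega)]
  simp only [mul_assoc]

lemma up_shift_up (p k q l : ℕ) (h1 : 1 ≤ q) (h2 : p ≤ q) (h3 : q + l + 1 ≤ p + k) :
    up p k * up q l = up (q+1) l * up p k := by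
  induction l with
  | zero => simp [up]
  | succ l ih =>
    rw [up, ← mul_assoc, ih (by omega), mul_assoc, up_shift p k (q+l) (by omega) (by omega)
      (by omega), ← mul_assoc, up]
    congr 3; omega

def Dp (r : ℕ) (v : ℕ → ℕ) : ℕ → Equiv.Perm ℤ
  | 0 => 1
  | k+1 => sB (r+k+1-v k) * Dp r v k

def Xp (r : ℕ) : ℕ → Equiv.Perm ℤ
  | 0 => 1
  | k+1 => sB (r+k+1) * Xp r k

def Ap (r : ℕ) (m : ℕ → ℕ) : ℕ → Equiv.Perm ℤ
  | 0 => 1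
  | k+1 => up (r+k-m k+1) (m k) * Ap r m k

def Ap' (r : ℕ) (m : ℕ → ℕ) : ℕ → Equiv.Perm ℤ
  | 0 => 1
  | k+1 => up (r+k-m k+2) (m k) * Ap' r m k

def Rows (r : ℕ) (m v : ℕ → ℕ) : ℕ → Equiv.Perm ℤ
  | 0 => 1
  | k+1 => Rows r m v k * (Dp r v k * up 0 (r+k+1-m k))

def Wp (r : ℕ) : ℕ → Equiv.Perm ℤ
  | 0 => 1
  | k+1 => Wp r k * (Xp r k * up 0 (r+k+1))

structure Good (d r : ℕ) (m v : ℕ → ℕ) : Prop where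
  le : ∀ k < d, m k ≤ r + k
  step : ∀ k, k + 1 < d → m (k+1) ≤ m k + 1
  vle : ∀ k < d, v k ≤ m k
  vmono : ∀ k, k + 1 < d → v (k+1) ≤ v k
  v0 : 0 < d → v 0 = m 0
  vs : ∀ k, k + 1 < d → v (k+1) < m (k+1) → v (k+1) = v k

lemma Dp_comm {d r m v} (g : Good d r m v) (k : ℕ) (hk : k < d) (p l : ℕ)
    (h : r + k + 2 ≤ p + v k) : Dp r v k * up p l = up p l * Dp r v k := by
  induction k generalizing p with
  | zero => simp [Dp]
  | succ k ih =>
    have := g.vmono k hk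
    have h2 := g.vle k (by omega)
    have h3 := g.le k (by omega)
    rw [Dp, mul_assoc, ih (by omega) p (by omega), ← mul_assoc, sB_up_comm_lo _ _ _ (by omega),
      mul_assoc]

lemma Dp_key {d r m v} (g : Good d r m v) (k : ℕ) (hk : k < d) (e l : ℕ)
    (he1 : v k ≤ e) (he2 : e ≤ m k) (hl : e ≤ l) :
    Dp r v (k+1) * up (r+k+1-e+1) l = up (r+k+1-e) (l+1) * Dp r v k := by
  induction k generalizing e l with
  | zero =>
    have := g.v0 hk
    have : e = v 0 := by omega
    subst this
    simp [Dp, up_succ']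
  | succ k ih =>
    have h0 := g.le _ hk
    by_cases h : e = v (k+1)
    · subst h
      rw [Dp, mul_assoc, Dp_comm g (k+1) hk _ _ (by omega), ← mul_assoc, up_succ']
    · have h1 := g.vs k hk (by omega)
      have h2 := g.step k hk
      have h3 := g.vle k (by omega)
      have h4 := g.le k (by omega)
      have := ih (by omega) (e-1) l (by omega) (by omega) (by omega)
      rw [show r + k + 1 - (e-1) = r + (k+1) + 1 - e by omega] at this
      rw [Dp, mul_assoc, this, ← mul_assoc]
      rw [show r + (k+1) + 1 - v (k+1) = (r+k+1 - v k) + 1 by omega,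
        ← up_shift _ _ _ (by omega) (by omega) (by omega), mul_assoc, ← Dp]

lemma Ap_comm {d r m v} (g : Good d r m v) (k : ℕ) (hk : k ≤ d) (j : ℕ) (hj : r + k + 1 ≤ j) :
    Ap r m k * sB j = sB j * Ap r m k := by
  induction k with
  | zero => simp [Ap]
  | succ k ih =>
    have := g.le k (by omega)
    rw [Ap, mul_assoc, ih (by omega) (by omega), ← mul_assoc, ← sB_up_comm_hi _ _ _ (by omega),
      mul_assoc]

lemma key {d r m v} (g : Good d r m v) (k : ℕ) (hk : k ≤ d) :
    Dp r v k * Ap' r m k = Ap r m k * Xp r k := by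
  induction k with
  | zero => simp [Dp, Ap, Ap', Xp]
  | succ k ih =>
    have h0 := g.le k (by omega)
    have h1 := g.vle k (by omega)
    have := Dp_key g k (by omega) (m k) (m k) h1 le_rfl le_rfl
    rw [show r + k + 1 - m k + 1 = r + k - m k + 2 by omega] at this
    rw [Ap', ← mul_assoc, this, Ap, Xp, mul_assoc, ih (by omega), up,
      show r + k + 1 - m k = r + k - m k + 1 by omega,
      show r + k - m k + 1 + m k = r + k + 1 by omega]
    have c := Ap_comm g k (by omega) (r+k+1) le_rfl
    simp only [mul_assoc]
    rw [← mul_assoc (Ap r m k) (sB _), c]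
    simp only [mul_assoc]

lemma Ap_conj {d r m v} (g : Good d r m v) (k : ℕ) (hk : k ≤ d) (q : ℕ) (hq : r + k + 1 ≤ q) :
    up 0 q * Ap r m k = Ap' r m k * up 0 q := by
  induction k with
  | zero => simp [Ap, Ap']
  | succ k ih =>
    have := g.le k (by omega)
    rw [Ap, Ap', ← mul_assoc, up_shift_up _ _ _ _ (by omega) (by omega) (by omega), mul_assoc,
      ih (by omega) (by omega), mul_assoc]

lemma Rows_mul {d r m v} (g : Good d r m v) (k : ℕ) (hk : k ≤ d) :
    Rows r m v k * Ap r m k = Wp r k := by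
  induction k with
  | zero => simp [Rows, Ap, Wp]
  | succ k ih =>
    have h0 := g.le k (by omega)
    rw [Rows, Ap, Wp, ← ih (by omega)]
    have h := up_add 0 (r+k+1-m k) (m k)
    rw [show r + k + 1 - m k + m k = r + k + 1 by omega,
      show 0 + (r + k + 1 - m k) = r + k - m k + 1 by omega] at h
    have : up 0 (r+k+1-m k) * (up (r+k-m k+1) (m k) * Ap r m k)
        = Ap' r m k * up 0 (r+k+1) := by
      rw [← mul_assoc, ← h, Ap_conj g k (by omega) _ le_rfl]
    simp only [mul_assoc] at *
    rw [this, ← mul_assoc (Dp r v k), key g k (by omega)]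
    simp only [mul_assoc]

lemma up_zero_apply (k : ℕ) (x : ℤ) (hx : 1 ≤ x) :
    up 0 (k+1) x = if x < k + 1 then x + 1 else if x = k+1 then -1 else x := by
  induction k generalizing x with
  | zero => simp [up, sB_apply]; split_ifs <;> omega
  | succ k ih =>
    rw [up, Equiv.Perm.mul_apply, sB_apply]
    have h0 : ¬ (0 + (k+1) = 0) := by omega
    rw [if_neg h0]
    push_cast
    split_ifs <;> (try omega) <;> (rw [ih _ (by omega)]; split_ifs <;> omega)

lemma up_odd (p k : ℕ) (x : ℤ) : up p k (-x) = - up p k x := by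
  induction k generalizing x with
  | zero => simp [up]
  | succ k ih => simp [up, sB_odd, ih]

lemma Xp_odd (p k : ℕ) (x : ℤ) : Xp p k (-x) = - Xp p k x := by
  induction k generalizing x with
  | zero => simp [Xp]
  | succ k ih => simp [Xp, sB_odd, ih]

lemma Xp_apply (r k : ℕ) (x : ℤ) (hx : 1 ≤ x) :
    Xp r k x = if x = r + 1 then (r:ℤ) + k + 1 else if r + 2 ≤ x ∧ x ≤ r + k + 1 then x - 1
      else x := by
  induction k generalizing x with
  | zero => simp [Xp]; split_ifs <;> omega
  | succ k ih =>
    rw [Xp, Equiv.Perm.mul_apply, ih _ hx, sB_apply]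
    have h0 : ¬ (r+k+1 = 0) := by omega
    rw [if_neg h0]
    push_cast
    split_ifs <;> omega

lemma Wp_odd (p k : ℕ) (x : ℤ) : Wp p k (-x) = - Wp p k x := by
  induction k generalizing x with
  | zero => simp [Wp]
  | succ k ih => simp [Wp, Xp_odd, up_odd, ih]

lemma Wp_apply (r k : ℕ) (x : ℤ) (hx : 1 ≤ x) :
    Wp r k x = if x ≤ r then (k:ℤ) + x else if x ≤ k + r then -(x - r) else x := by
  induction k generalizing x with
  | zero => simp [Wp]; omega
  | succ k ih =>
    have h1 := up_zero_apply (r+k) x hx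
    rw [Wp, Equiv.Perm.mul_apply, Equiv.Perm.mul_apply, h1]
    push_cast
    by_cases a : x < r + k + 1
    · rw [if_pos a, Xp_apply _ _ _ (by omega)]
      split_ifs <;> (try omega) <;> (rw [ih _ (by omega)]; split_ifs <;> omega)
    · rw [if_neg a]
      by_cases b : x = r + k + 1
      · rw [if_pos b, Xp_odd, Xp_apply _ _ _ le_rfl, Wp_odd]
        split_ifs <;> (try omega) <;> (rw [ih _ (by omega)]; split_ifs <;> omega)
      · rw [if_neg b, Xp_apply _ _ _ hx]
        split_ifs <;> (try omega) <;> (rw [ih _ (by omega)]; split_ifs <;> omega)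

lemma isWdr_eq (d r : ℕ) (w : Equiv.Perm ℤ) (hw : IsWdr d r w) : w = Wp r d := by
  obtain ⟨⟨h1, h2⟩, h3, h4⟩ := hw
  have hp : ∀ x : ℤ, 1 ≤ x → w x = Wp r d x := by
    intro x hx
    rw [Wp_apply r d x hx]
    split_ifs with a b
    · exact h3 x hx a
    · exact h4 x (by omega) b
    · exact h2 x (by push_cast; rw [abs_of_pos (by omega)]; omega)
  ext x
  rcases lt_trichotomy x 0 with h | h | h
  · have := hp (-x) (by omega)
    rw [h1, Wp_odd] at this; omega
  · subst h
    have e1 := h1 0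
    have e2 := Wp_odd r d 0
    simp only [neg_zero] at e1 e2; omega
  · exact hp x (by omega)

/-! lists -/

lemma wordProd_append (L M : List ℕ) : wordProd (L ++ M) = wordProd L * wordProd M := by
  simp [wordProd]

lemma wordProd_reverse (L : List ℕ) : wordProd L * wordProd L.reverse = 1 := by
  induction L with
  | nil => simp [wordProd]
  | cons a L ih =>
    have : wordProd (a :: L) = sB a * wordProd L := by simp [wordProd]
    rw [List.reverse_cons, wordProd_append, this]
    have e : wordProd [a] = sB a := by simp [wordProd]
    rw [e, mul_assoc, ← mul_assoc (wordProd L), ih, one_mul, sB_sq]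

lemma wordProd_up (p k : ℕ) : wordProd ((List.range k).map (fun t => p + t)) = up p k := by
  induction k with
  | zero => simp [wordProd, up]
  | succ k ih =>
    rw [List.range_succ, List.map_append, wordProd_append, ih, up]; simp [wordProd]

lemma wordProd_Dp (d r : ℕ) (nu : ℕ → ℕ) (k : ℕ) (hk : k ≤ d) :
    wordProd ((List.range k).map (fun t => r + k - t - nu (d - k + 1 + t)))
      = Dp r (fun j => nu (d - j)) k := by
  induction k with
  | zero => simp [wordProd, Dp]
  | succ k ih =>
    rw [List.range_succ_eq_map, List.map_cons, List.map_map, Dp, ← ih (by omega)]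
    have : ∀ a L, wordProd (a :: L) = sB a * wordProd L := by intros; simp [wordProd]
    rw [this]
    congr 2
    · rw [show d - (k+1) + 1 + 0 = d - k by omega]; congr 1
    · apply List.map_congr_left
      intro t _
      simp only [Function.comp]
      rw [show d - (k+1) + 1 + t.succ = d - k + 1 + t by omega,
        show r + (k+1) - t.succ = r + k - t by omega]

section
variable {d r : ℕ} {lam : ℕ → ℕ}

lemma lam_ge (hlam : IsStrictPartition d lam) (k : ℕ) (hk : k < d) : k + 1 ≤ lam (d - k) := by
  induction k with
  | zero => exact hlam.2
  | succ k ih =>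
    have h1 := ih (by omega)
    have h2 := hlam.1 (d - (k+1)) (by omega) (by omega)
    rw [show d - (k+1) + 1 = d - k by omega] at h2
    omega

lemma nu_le (i j : ℕ) (h : i ≤ j) (h' : j ≤ d) : nuF d r lam i ≤ muF d r lam j :=
  Nat.sInf_le ⟨j, h, h', rfl⟩

lemma nu_mem (i : ℕ) (h : i ≤ d) : ∃ j, i ≤ j ∧ j ≤ d ∧ nuF d r lam i = muF d r lam j :=
  Nat.sInf_mem (s := {m : ℕ | ∃ j : ℕ, i ≤ j ∧ j ≤ d ∧ m = muF d r lam j}) ⟨_, d, h, le_rfl, rfl⟩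

lemma good (hlam : IsStrictPartition d lam)
    (hsub : ∀ i : ℕ, 1 ≤ i → i ≤ d → lam i ≤ Zlam d r i) :
    Good d r (fun k => muF d r lam (d - k)) (fun k => nuF d r lam (d - k)) := by
  constructor
  · intro k hk
    have := lam_ge hlam k hk
    simp only [muF]; omega
  · intro k hk
    have h2 := hlam.1 (d - (k+1)) (by omega) (by omega)
    have h3 := hsub (d - k) (by omega) (by omega)
    have h4 := hsub (d - (k+1)) (by omega) (by omega)
    rw [show d - (k+1) + 1 = d - k by omega] at h2
    simp only [muF, Zlam] at *; omega
  · intro k hk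
    exact nu_le _ _ le_rfl (by omega)
  · intro k hk
    obtain ⟨j, h1, h2, h3⟩ := nu_mem (d := d) (r := r) (lam := lam) (d - k) (by omega)
    show nuF d r lam (d - (k+1)) ≤ nuF d r lam (d - k)
    rw [h3]
    exact nu_le _ _ (by omega) h2
  · intro h
    obtain ⟨j, h1, h2, h3⟩ := nu_mem (d := d) (r := r) (lam := lam) (d - 0) (by omega)
    show nuF d r lam (d - 0) = muF d r lam (d - 0)
    rw [h3]
    congr 1; omega
  · intro k hk h
    change nuF d r lam (d - (k+1)) < muF d r lam (d - (k+1)) at h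
    change nuF d r lam (d - (k+1)) = nuF d r lam (d - k)
    obtain ⟨j, h1, h2, h3⟩ := nu_mem (d := d) (r := r) (lam := lam) (d - (k+1)) (by omega)
    have hj : j ≠ d - (k+1) := by rintro rfl; omega
    have a := nu_le (r := r) (lam := lam) (d - k) j (by omega) h2
    obtain ⟨j', h1', h2', h3'⟩ := nu_mem (d := d) (r := r) (lam := lam) (d - k) (by omega)
    have b := nu_le (r := r) (lam := lam) (d - (k+1)) j' (by omega) h2'
    omega

lemma row_prod (hlam : IsStrictPartition d lam)
    (hsub : ∀ i : ℕ, 1 ≤ i → i ≤ d → lam i ≤ Zlam d r i) (k : ℕ) (hk : k < d) :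
    wordProd (rowWordP d r lam (d - k)) =
      Dp r (fun k => nuF d r lam (d - k)) k * up 0 (r + k + 1 - muF d r lam (d - k)) := by
  have h1 := lam_ge hlam k hk
  have h2 := hsub (d - k) (by omega) (by omega)
  simp only [Zlam] at h2
  have e : lam (d - k) = k + (r + k + 1 - muF d r lam (d - k)) := by
    simp only [muF]; omega
  rw [rowWordP, e, List.range_add, List.map_append, wordProd_append, ← wordProd_Dp d r _ k hk.le,
    ← wordProd_up, List.map_map]
  congr 2
  · apply List.map_congr_left
    intro t ht
    rw [List.mem_range] at ht
    rw [show d - (d - k) = k by omega, if_pos ht]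
  · apply List.map_congr_left
    intro t ht
    simp only [Function.comp]
    rw [show d - (d - k) = k by omega, if_neg (by omega)]
    omega

lemma rows_prod (hlam : IsStrictPartition d lam)
    (hsub : ∀ i : ℕ, 1 ≤ i → i ≤ d → lam i ≤ Zlam d r i) (j : ℕ) (hj : j ≤ d) :
    wordProd ((List.range j).flatMap fun k => rowWordP d r lam (d - k)) =
      Rows r (fun k => muF d r lam (d - k)) (fun k => nuF d r lam (d - k)) j := by
  induction j with
  | zero => simp [wordProd, Rows]
  | succ j ih =>
    rw [List.range_succ, List.flatMap_append, wordProd_append, ih (by omega), Rows,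
      ← row_prod hlam hsub j (by omega)]
    simp

lemma a_prod (hlam : IsStrictPartition d lam) (j : ℕ) (hj : j ≤ d) :
    wordProd ((List.range j).flatMap fun k =>
    (List.range (muF d r lam (k + 1))).map fun t =>
      d + r - (k + 1) - muF d r lam (k + 1) + 1 + t) * Ap r (fun k => muF d r lam (d - k)) (d - j)
      = Ap r (fun k => muF d r lam (d - k)) d := by
  induction j with
  | zero => simp [wordProd]
  | succ j ih =>
    rw [← ih (by omega), List.range_succ, List.flatMap_append, wordProd_append, mul_assoc]
    congr 1
    rw [show d - j = (d - (j+1)) + 1 by omega, Ap]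
    simp only [List.flatMap_singleton]
    rw [wordProd_up, show d - (d - (j+1)) = j + 1 by omega]
    congr 3; omega

lemma prod_eq (hlam : IsStrictPartition d lam)
    (hsub : ∀ i : ℕ, 1 ≤ i → i ≤ d → lam i ≤ Zlam d r i) :
    wordProd (piWordP d r lam) * wordProd (aLamWord d r lam) = Wp r d := by
  have h1 := rows_prod hlam hsub d le_rfl
  have h2 := a_prod (r := r) hlam d le_rfl
  rw [Nat.sub_self, Ap, mul_one] at h2
  rw [piWordP, aLamWord, h1, h2]
  exact Rows_mul (good hlam hsub) d le_rfl

lemma len_rows (hsub : ∀ i : ℕ, 1 ≤ i → i ≤ d → lam i ≤ Zlam d r i) (j : ℕ) (hj : j ≤ d) :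
    ((List.range j).flatMap fun k => rowWordP d r lam (d - k)).length +
      ∑ k ∈ Finset.range j, muF d r lam (d - k) = j * (j + r) := by
  induction j with
  | zero => simp
  | succ j ih =>
    have h1 := ih (by omega)
    have h2 := hsub (d - j) (by omega) (by omega)
    have e : (rowWordP d r lam (d - j)).length = lam (d - j) := by simp [rowWordP]
    have e2 : lam (d - j) + muF d r lam (d - j) = r + 2 * j + 1 := by
      simp only [muF, Zlam] at *; omega
    rw [List.range_succ, List.flatMap_append, List.length_append, Finset.sum_range_succ,
      List.flatMap_singleton, e]
    have : (j + 1) * (j + 1 + r) = j * (j + r) + (r + 2 * j + 1) := by ring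
    omega

lemma len_a (j : ℕ) (hj : j ≤ d) :
    ((List.range j).flatMap fun k =>
    (List.range (muF d r lam (k + 1))).map fun t =>
      d + r - (k + 1) - muF d r lam (k + 1) + 1 + t).length +
      ∑ k ∈ Finset.range (d - j), muF d r lam (d - k) =
      ∑ k ∈ Finset.range d, muF d r lam (d - k) := by
  induction j with
  | zero => simp
  | succ j ih =>
    rw [← ih (by omega), List.range_succ, List.flatMap_append, List.length_append,
      List.flatMap_singleton, show d - j = (d - (j+1)) + 1 by omega, Finset.sum_range_succ,
      List.length_map, List.length_range, show d - (d - (j+1)) = j + 1 by omega]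
    omega

lemma lengths (hsub : ∀ i : ℕ, 1 ≤ i → i ≤ d → lam i ≤ Zlam d r i) :
    (piWordP d r lam).length + (aLamWord d r lam).length = d * (d + r) := by
  have h1 := len_rows hsub d le_rfl
  have h2 := len_a (r := r) (lam := lam) d (le_refl d)
  rw [Nat.sub_self, Finset.sum_range_zero] at h2
  rw [piWordP, aLamWord]
  omega

lemma letters_P (hsub : ∀ i : ℕ, 1 ≤ i → i ≤ d → lam i ≤ Zlam d r i) :
    ∀ a ∈ piWordP d r lam, a < d + r := by
  intro a ha
  simp only [piWordP, rowWordP, List.mem_flatMap, List.mem_map, List.mem_range] at ha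
  obtain ⟨k, hk, t, ht, rfl⟩ := ha
  have := hsub (d - k) (by omega) (by omega)
  simp only [Zlam] at this
  split_ifs <;> omega

end

/-! length lower bound -/

noncomputable def InvF (n : ℕ) (w : Equiv.Perm ℤ) : Finset (ℤ × ℤ) :=
  ((Finset.Icc (-(n:ℤ)) n) ×ˢ (Finset.Icc 1 (n:ℤ))).filter
    (fun p => p.1 ≠ 0 ∧ -p.2 ≤ p.1 ∧ p.1 < p.2 ∧ w p.2 < w p.1)

lemma InvF_step (n a : ℕ) (w : Equiv.Perm ℤ) (hw : ∀ i, w (-i) = - w i) :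
    (InvF n (sB a * w)).card ≤ (InvF n w).card + 1 := by
  classical
  set S := ((Finset.Icc (-(n:ℤ)) n) ×ˢ (Finset.Icc 1 (n:ℤ))).filter
    (fun p => -p.2 ≤ p.1 ∧ p.1 < p.2 ∧ ((a ≠ 0 ∧ ((w p.1 = a ∧ w p.2 = a + 1) ∨
      (w p.1 = -a - 1 ∧ w p.2 = -a))) ∨ (a = 0 ∧ w p.1 = -1 ∧ w p.2 = 1))) with hS
  have w0 : w 0 = 0 := by have := hw 0; simp only [neg_zero] at this; omega
  have sub : InvF n (sB a * w) ⊆ InvF n w ∪ S := by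
    rintro ⟨i, j⟩ h
    rw [InvF, Finset.mem_filter] at h
    rw [Finset.mem_union, InvF, hS, Finset.mem_filter, Finset.mem_filter]
    simp only [Equiv.Perm.mul_apply] at h
    dsimp only at h ⊢
    obtain ⟨h1, h2, h3, h4, h5⟩ := h
    by_cases c : w j < w i
    · exact Or.inl ⟨h1, h2, h3, h4, c⟩
    · refine Or.inr ⟨h1, h3, h4, ?_⟩
      have ne : w i ≠ w j := fun h => by have := w.injective h; omega
      have nz : w i ≠ 0 := fun h => h2 (w.injective (h.trans w0.symm))
      have nz' : w j ≠ 0 := fun h => by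
        have := w.injective (h.trans w0.symm)
        simp only [Finset.mem_product, Finset.mem_Icc] at h1
        omega
      rw [sB_apply, sB_apply] at h5
      by_cases ha : a = 0
      · simp only [ha, if_true] at h5
        split_ifs at h5 <;> omega
      · simp only [ha, if_false] at h5
        split_ifs at h5 <;> omega
  have cS : S.card ≤ 1 := by
    rw [Finset.card_le_one]
    rintro ⟨i, j⟩ h ⟨i', j'⟩ h'
    simp only [hS, Finset.mem_filter, Finset.mem_product, Finset.mem_Icc] at h h'
    obtain ⟨h1, h3, h4, h5⟩ := h
    obtain ⟨h1', h3', h4', h5'⟩ := h'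
    have inj : ∀ x y, w x = w y → x = y := fun x y h => w.injective h
    have inj' : ∀ x y, w x = - w y → x = -y := fun x y h => w.injective (by rw [hw, h])
    have a1 := inj i i'
    have a2 := inj j j'
    have a3 := inj' i j'
    have a4 := inj' j i'
    have a5 := inj' i' j
    have a6 := inj' j' i
    have e1 : w i = w i' → w j = w j' → i = i' ∧ j = j' := fun x y => ⟨a1 x, a2 y⟩
    have e2 : w i ≠ - w j → w i = - w j' → w j = - w i' → False := by
      intro ne x y
      have := a3 x
      have := a4 y
      have hi : i = -j := by omega
      have : w i = - w j := by rw [hi, hw]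
      omega
    have : i = i' ∧ j = j' := by
      rcases h5 with ⟨p, q | q⟩ | ⟨p, q⟩ <;> rcases h5' with ⟨p', q' | q'⟩ | ⟨p', q'⟩ <;>
        first
        | omega
        | exact e1 (by omega) (by omega)
        | exact (e2 (by omega) (by omega) (by omega)).elim
    rw [this.1, this.2]
  calc _ ≤ (InvF n w ∪ S).card := Finset.card_le_card sub
    _ ≤ _ := Finset.card_union_le _ _
    _ ≤ _ := by omega

lemma wordProd_odd (L : List ℕ) (x : ℤ) : wordProd L (-x) = - wordProd L x := by
  induction L generalizing x with
  | nil => simp [wordProd]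
  | cons a L ih =>
    have : wordProd (a :: L) = sB a * wordProd L := by simp [wordProd]
    rw [this, Equiv.Perm.mul_apply, Equiv.Perm.mul_apply, ih, sB_odd]

lemma InvF_le (n : ℕ) (L : List ℕ) : (InvF n (wordProd L)).card ≤ L.length := by
  induction L with
  | nil =>
    simp only [wordProd, List.map_nil, List.prod_nil, InvF, List.length_nil, Nat.le_zero,
      Finset.card_eq_zero, Equiv.Perm.one_apply]
    apply Finset.filter_false_of_mem
    intro p _
    omega
  | cons a L ih =>
    have : wordProd (a :: L) = sB a * wordProd L := by simp [wordProd]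
    rw [this, List.length_cons]
    have := InvF_step n a (wordProd L) (wordProd_odd L)
    omega

lemma InvF_Wp (d r : ℕ) : d * (d + r) ≤ (InvF (d + r) (Wp r d)).card := by
  classical
  set T : Finset (Σ _ : ℕ, ℤ) := (Finset.range d).sigma (fun k =>
    Finset.Icc (1:ℤ) (r + k) ∪ Finset.Icc (-((r:ℤ) + k + 1)) (-(r:ℤ) - 1)) with hT
  have hc : T.card = d * (d + r) := by
    rw [hT, Finset.card_sigma]
    have : ∀ k ∈ Finset.range d, (Finset.Icc (1:ℤ) (r + k) ∪
        Finset.Icc (-((r:ℤ) + k + 1)) (-(r:ℤ) - 1)).card = r + 2 * k + 1 := by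
      intro k _
      rw [Finset.card_union_of_disjoint, Int.card_Icc, Int.card_Icc]
      · omega
      · rw [Finset.disjoint_left]
        intro x hx hx'
        simp only [Finset.mem_Icc] at hx hx'
        omega
    rw [Finset.sum_congr rfl this]
    clear this hT T
    induction d with
    | zero => simp
    | succ d ih => rw [Finset.sum_range_succ, ih]; ring
  rw [← hc]
  apply Finset.card_le_card_of_injOn (fun p => (p.2, (r:ℤ) + p.1 + 1))
  · rintro ⟨k, x⟩ h
    simp only [hT, Finset.mem_coe, Finset.mem_sigma, Finset.mem_range, Finset.mem_union,
      Finset.mem_Icc] at h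
    simp only [InvF, Finset.mem_coe, Finset.mem_filter, Finset.mem_product, Finset.mem_Icc]
    push_cast
    obtain ⟨hk, hx⟩ := h
    refine ⟨by omega, by omega, by omega, by omega, ?_⟩
    rw [Wp_apply _ _ _ (by omega)]
    rcases hx with hx | hx
    · rw [Wp_apply _ _ _ hx.1]
      split_ifs <;> omega
    · have e : x = -(-x) := by omega
      rw [e, Wp_odd, Wp_apply _ _ (-x) (by omega)]
      split_ifs <;> omega
  · rintro ⟨k, x⟩ _ ⟨k', x'⟩ _ h
    simp only [Prod.mk.injEq] at h
    obtain ⟨h1, h2⟩ := h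
    have : k = k' := by omega
    subst this; subst h1; rfl

lemma main_aux (d r : ℕ)
    (lam : ℕ → ℕ) (hlam : IsStrictPartition d lam)
    (hsub : ∀ i : ℕ, 1 ≤ i → i ≤ d → lam i ≤ Zlam d r i)
    (w : Equiv.Perm ℤ) (hw : IsWdr d r w) :
    IsReducedWord (d + r) (w * wordProd (aLamWord d r lam).reverse)
      (piWordP d r lam) := by
  have hw' := isWdr_eq d r w hw
  subst hw'
  have hp := prod_eq hlam hsub
  have hr := wordProd_reverse (aLamWord d r lam)
  have hr' : wordProd (aLamWord d r lam).reverse * wordProd (aLamWord d r lam) = 1 := by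
    have := wordProd_reverse (aLamWord d r lam).reverse
    rwa [List.reverse_reverse] at this
  have hP : wordProd (piWordP d r lam) = Wp r d * wordProd (aLamWord d r lam).reverse := by
    rw [← hp, mul_assoc, hr, mul_one]
  refine ⟨letters_P hsub, hP, ?_⟩
  apply le_antisymm
  · refine le_csInf ⟨_, _, letters_P hsub, hP, rfl⟩ ?_
    rintro m ⟨L, _, hL, rfl⟩
    have e : wordProd (L ++ aLamWord d r lam) = Wp r d := by
      rw [wordProd_append, hL, mul_assoc, hr', mul_one]
    have h1 := InvF_le (d + r) (L ++ aLamWord d r lam)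
    rw [e, List.length_append] at h1
    have h2 := InvF_Wp d r
    have h3 := lengths hsub
    omega
  · exact Nat.sInf_le ⟨_, letters_P hsub, hP, rfl⟩

/-- the reading word of the tableau `P` of shape `λ` with
`P(i,c) = c` for `c ≥ 0` and `P(i,c) = r - c - ν_{d+1+c}` for `c < 0`
is a reduced word of `w^λ`. -/
theorem piWordP_is_reduced (d r : ℕ) (hd : 1 ≤ d)
    (lam : ℕ → ℕ) (hlam : IsStrictPartition d lam)
    (hsub : ∀ i : ℕ, 1 ≤ i → i ≤ d → lam i ≤ Zlam d r i)
    (w : Equiv.Perm ℤ) (hw : IsWdr d r w) :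
    IsReducedWord (d + r) (w * wordProd (aLamWord d r lam).reverse)
      (piWordP d r lam) := by
  exact main_aux d r lam hlam hsub w hw

end BST
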